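/- arXiv:1403.4164 — 4 statements merged into one kernel-verified Lean document; each statement's English description precedes it below -/
import Mathlib

section
/- Let r, w, y ∈ Z and η, ϑ ∈ E* satisfy w = P_r^J(η), y = P_r^J(ϑ), and ‖ϑ − η‖_*² ≤ L²‖w − r‖² + M² for some constants L, M ≥ 0. Then for every u ∈ Z, ⟨ϑ, w − u⟩ + J(w) − J(u) ≤ V(r, u) − V(y, u) − (μ/2 − L²/(2μ))‖r − w‖² + M²/(2μ). -/
/-!
The first-order optimality condition for a prox-point `p` of center `z`, rewritten with the
three-point identity of the Bregman divergence `V`, reads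
`η (p - u) + J p - J u ≤ V z u - V p u - V z p`. Use it for `w` at `u = y` and for `y` at an
arbitrary `u`, and add: what remains is the error term `(ϑ - η) (w - y)`. By Young's inequality its
quadratic part in `w - y` is absorbed by `V w y`, and its part in `‖ϑ - η‖` is controlled by
hypothesis.
-/

section Optimality

variable {E : Type*} [NormedAddCommGroup E] [NormedSpace ℝ E]

theorem add_sub_nonneg_of_isMinOn_add_convexOn {s : Set E} {f g : E → ℝ} {f' : E →L[ℝ] ℝ} {p u : E}
    (hf : HasFDerivWithinAt f f' s p) (hg : ConvexOn ℝ s g)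
    (hmin : IsMinOn (fun x => f x + g x) s p) (hp : p ∈ s) (hu : u ∈ s) :
    0 ≤ f' (u - p) + (g u - g p) := by
  -- `g` need not be differentiable: minimise the differentiable `(x, t) ↦ f x + t` on its epigraph.
  let epi : Set (E × ℝ) := {q | q.1 ∈ s ∧ g q.1 ≤ q.2}
  have hsegment : segment ℝ (p, g p) (u, g u) ⊆ epi :=
    hg.convex_epigraph.segment_subset ⟨hp, le_rfl⟩ ⟨hu, le_rfl⟩
  have hmin_epi : IsMinOn (fun q : E × ℝ => f q.1 + q.2) epi (p, g p) := fun q hq =>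
    (hmin hq.1).trans (add_le_add_right hq.2 (f q.1))
  have hderiv : HasFDerivWithinAt (fun q : E × ℝ => f q.1 + q.2)
      (f'.comp (.fst ℝ E ℝ) + .snd ℝ E ℝ) epi (p, g p) :=
    (hf.comp (p, g p) hasFDerivWithinAt_fst fun _ hq => hq.1).add hasFDerivWithinAt_snd
  exact hmin_epi.localize.hasFDerivWithinAt_nonneg hderiv
    (sub_mem_posTangentConeAt_of_segment_subset hsegment)

end Optimality

section Young

variable {E : Type*} [SeminormedAddCommGroup E] [NormedSpace ℝ E]

theorem apply_le_norm_sq_div_add_norm_sq (φ : E →L[ℝ] ℝ) (x : E) {μ : ℝ} (hμ : 0 < μ) :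
    φ x ≤ ‖φ‖ ^ 2 / (2 * μ) + μ / 2 * ‖x‖ ^ 2 := by
  have hyoung : 2 * ‖x‖ * ‖φ‖ ≤ μ * ‖x‖ ^ 2 + μ⁻¹ * ‖φ‖ ^ 2 := two_mul_le_add_mul_sq hμ
  calc φ x ≤ ‖φ‖ * ‖x‖ := (Real.le_norm_self _).trans (φ.le_opNorm x)
    _ ≤ (μ * ‖x‖ ^ 2 + μ⁻¹ * ‖φ‖ ^ 2) / 2 := by linarith
    _ = ‖φ‖ ^ 2 / (2 * μ) + μ / 2 * ‖x‖ ^ 2 := by ring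

end Young

section BregmanDiv

variable {E : Type*} [AddCommGroup E] [Module ℝ E] [TopologicalSpace E]

/-- The Bregman divergence `V(z, u)` of `ω`. The derivative `Dω` is a separate argument because the
derivative of `ω` within a set need not be unique. -/
def bregmanDiv (ω : E → ℝ) (Dω : E → E →L[ℝ] ℝ) (z u : E) : ℝ :=
  ω u - ω z - Dω z (u - z)

/-- `p` is a value of the prox-mapping `P_z^J(η)` over `Z`. This is a predicate, so that neither
existence nor uniqueness of the minimizer is presupposed. -/
structure IsProxPoint (Z : Set E) (ω : E → ℝ) (Dω : E → E →L[ℝ] ℝ) (J : E → ℝ) (z : E)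
    (η : E →L[ℝ] ℝ) (p : E) : Prop where
  mem : p ∈ Z
  isMinOn : IsMinOn (fun u => η (u - z) + bregmanDiv ω Dω z u + J u) Z p

theorem bregmanDiv_three_point (ω : E → ℝ) (Dω : E → E →L[ℝ] ℝ) (z p u : E) :
    Dω p (u - p) - Dω z (u - p) =
      bregmanDiv ω Dω z u - bregmanDiv ω Dω p u - bregmanDiv ω Dω z p := by
  simp only [bregmanDiv, map_sub]
  ring

end BregmanDiv

section ProxMapping

variable {E : Type*} [NormedAddCommGroup E] [NormedSpace ℝ E]
  {Z : Set E} {ω : E → ℝ} {Dω : E → E →L[ℝ] ℝ} {J : E → ℝ}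

theorem hasFDerivWithinAt_linear_add_bregmanDiv {p : E} (hω : HasFDerivWithinAt ω (Dω p) Z p)
    (η : E →L[ℝ] ℝ) (z : E) :
    HasFDerivWithinAt (fun u => η (u - z) + bregmanDiv ω Dω z u) (η + (Dω p - Dω z)) Z p := by
  have hlinear (φ : E →L[ℝ] ℝ) : HasFDerivWithinAt (fun u => φ (u - z)) φ Z p :=
    φ.hasFDerivWithinAt.comp p ((hasFDerivWithinAt_id p Z).sub_const z) (Set.mapsTo_univ _ _)
  exact (hlinear η).add ((hω.sub_const (ω z)).sub (hlinear (Dω z)))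

theorem IsProxPoint.three_point_le {z p u : E} {η : E →L[ℝ] ℝ}
    (hp : IsProxPoint Z ω Dω J z η p) (hω : HasFDerivWithinAt ω (Dω p) Z p)
    (hJ : ConvexOn ℝ Z J) (hu : u ∈ Z) :
    η (p - u) + J p - J u ≤
      bregmanDiv ω Dω z u - bregmanDiv ω Dω p u - bregmanDiv ω Dω z p := by
  have hopt : 0 ≤ (η + (Dω p - Dω z)) (u - p) + (J u - J p) :=
    add_sub_nonneg_of_isMinOn_add_convexOn (hasFDerivWithinAt_linear_add_bregmanDiv hω η z) hJ
      hp.isMinOn hp.mem hu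
  have hthree := bregmanDiv_three_point ω Dω z p u
  simp only [add_apply, sub_apply] at hopt
  have hneg : η (u - p) = -η (p - u) := by rw [← map_neg, neg_sub]
  linarith

theorem IsProxPoint.extragradient_le {r w y u : E} {η ϑ : E →L[ℝ] ℝ}
    (hw : IsProxPoint Z ω Dω J r η w) (hy : IsProxPoint Z ω Dω J r ϑ y)
    (hωw : HasFDerivWithinAt ω (Dω w) Z w) (hωy : HasFDerivWithinAt ω (Dω y) Z y)
    (hJ : ConvexOn ℝ Z J) (hu : u ∈ Z) :
    ϑ (w - u) + J w - J u ≤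
      bregmanDiv ω Dω r u - bregmanDiv ω Dω y u - bregmanDiv ω Dω r w - bregmanDiv ω Dω w y
        + (ϑ - η) (w - y) := by
  have hwy := hw.three_point_le hωw hJ hy.mem
  have hyu := hy.three_point_le hωy hJ hu
  have hsplit : ϑ (w - u) = η (w - y) + ϑ (y - u) + (ϑ - η) (w - y) := by
    simp only [sub_apply, map_sub]
    ring
  linarith

theorem prox_mapping_recursion_general {μ : ℝ} (hμ : 0 < μ)
    (hω : ∀ z ∈ Z, HasFDerivWithinAt ω (Dω z) Z z)
    (hV : ∀ z ∈ Z, ∀ u ∈ Z, μ / 2 * ‖u - z‖ ^ 2 ≤ bregmanDiv ω Dω z u)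
    (hJ : ConvexOn ℝ Z J) {r w y : E} (hr : r ∈ Z) {η ϑ : E →L[ℝ] ℝ} {L M : ℝ}
    (hw : IsProxPoint Z ω Dω J r η w) (hy : IsProxPoint Z ω Dω J r ϑ y)
    (hLM : ‖ϑ - η‖ ^ 2 ≤ L ^ 2 * ‖w - r‖ ^ 2 + M ^ 2) {u : E} (hu : u ∈ Z) :
    ϑ (w - u) + J w - J u ≤
      bregmanDiv ω Dω r u - bregmanDiv ω Dω y u
        - (μ / 2 - L ^ 2 / (2 * μ)) * ‖r - w‖ ^ 2 + M ^ 2 / (2 * μ) := by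
  have hprox := hw.extragradient_le hy (hω w hw.mem) (hω y hy.mem) hJ hu
  have herror : (ϑ - η) (w - y) ≤
      L ^ 2 / (2 * μ) * ‖r - w‖ ^ 2 + M ^ 2 / (2 * μ) + μ / 2 * ‖y - w‖ ^ 2 :=
    calc (ϑ - η) (w - y) ≤ ‖ϑ - η‖ ^ 2 / (2 * μ) + μ / 2 * ‖w - y‖ ^ 2 :=
          apply_le_norm_sq_div_add_norm_sq _ _ hμ
      _ ≤ (L ^ 2 * ‖w - r‖ ^ 2 + M ^ 2) / (2 * μ) + μ / 2 * ‖w - y‖ ^ 2 := by gcongr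
      _ = _ := by rw [norm_sub_rev w r, norm_sub_rev w y]; ring
  have hVrw : μ / 2 * ‖r - w‖ ^ 2 ≤ bregmanDiv ω Dω r w := norm_sub_rev r w ▸ hV r hr w hw.mem
  have hVwy := hV w hw.mem y hy.mem
  linarith

end ProxMapping

/-- recursion property of two prox-mappings from the same center. -/
theorem prox_mapping_recursion
    {E : Type*} [NormedAddCommGroup E] [NormedSpace ℝ E] [FiniteDimensional ℝ E]
    (Z : Set E) (hZne : Z.Nonempty) (hZcl : IsClosed Z) (hZcv : Convex ℝ Z)
    (μ : ℝ) (hμ : 0 < μ)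
    (ω : E → ℝ) (Dω : E → E →L[ℝ] ℝ)
    (hωdiff : ∀ z ∈ Z, HasFDerivWithinAt ω (Dω z) Z z)
    (hωcont : ContinuousOn Dω Z)
    (hωsc : StrongConvexOn Z μ ω)
    (V : E → E → ℝ) (hV : ∀ z u, V z u = ω u - ω z - Dω z (u - z))
    (hVlb : ∀ z ∈ Z, ∀ u ∈ Z, μ / 2 * ‖u - z‖ ^ 2 ≤ V z u)
    (J : E → ℝ) (hJ : ConvexOn ℝ Z J)
    (r w y : E) (hrZ : r ∈ Z) (hwZ : w ∈ Z) (hyZ : y ∈ Z)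
    (η ϑ : E →L[ℝ] ℝ) (L M : ℝ) (hL : 0 ≤ L) (hM : 0 ≤ M)
    (hw : IsMinOn (fun u => η (u - r) + V r u + J u) Z w)
    (hy : IsMinOn (fun u => ϑ (u - r) + V r u + J u) Z y)
    (hLM : ‖ϑ - η‖ ^ 2 ≤ L ^ 2 * ‖w - r‖ ^ 2 + M ^ 2) :
    ∀ u ∈ Z, ϑ (w - u) + J w - J u ≤
      V r u - V y u - (μ / 2 - L ^ 2 / (2 * μ)) * ‖r - w‖ ^ 2 + M ^ 2 / (2 * μ) := by
  obtain rfl : V = bregmanDiv ω Dω := funext₂ hV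
  exact fun u hu =>
    prox_mapping_recursion_general hμ hωdiff hVlb hJ hrZ ⟨hwZ, hw⟩ ⟨hyZ, hy⟩ hLM hu
end

section
/- Let {r_t}_{t≥1} and {w_t}_{t≥1} be arbitrary sequences in Z, let α_t ∈ [0,1], and define w_1^{ag} = w_1 and, for t ≥ 1, w_t^{md} = (1−α_t) w_t^{ag} + α_t r_t and w_{t+1}^{ag} = (1−α_t) w_t^{ag} + α_t w_{t+1}. Then for every t ≥ 1 and every u ∈ Z, Q(w_{t+1}^{ag}, u) − (1−α_t) Q(w_t^{ag}, u) ≤ α_t⟨∇G(w_t^{md}), w_{t+1} − u⟩ + (L_G α_t²/2)‖w_{t+1} − r_t‖² + α_t⟨H(w_{t+1}), w_{t+1} − u⟩ + α_t J(w_{t+1}) − α_t J(u). -/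
/-!
Linearise `G` at `w_t^md`. Since `w_{t+1}^ag` and `w_t^md` are averages with the common component
`(1 - α_t) w_t^ag`, they differ by `α_t (w_{t+1} - r_t)`, so the quadratic error carries the factor
`α_t ^ 2`. Convexity of `G` bounds the linearisation at `w_t^ag` and at `u`, convexity of `J` bounds
`J` at the new average, and monotonicity replaces `H u` by `H w_{t+1}`.
-/

section Averaging

variable {E : Type*} [AddCommGroup E] [Module ℝ E] {Z : Set E}

theorem average_iterate_mem (hZ : Convex ℝ Z) {α : ℕ → ℝ} {w wag : ℕ → E} {t₀ : ℕ}
    (hα : ∀ t ≥ t₀, 0 ≤ α t ∧ α t ≤ 1) (hw : ∀ t ≥ t₀, w (t + 1) ∈ Z) (hwag₀ : wag t₀ ∈ Z)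
    (hwag : ∀ t ≥ t₀, wag (t + 1) = (1 - α t) • wag t + α t • w (t + 1)) :
    ∀ t ≥ t₀, wag t ∈ Z := by
  intro t ht
  induction t, ht using Nat.le_induction with
  | base => exact hwag₀
  | succ t ht ih =>
    rw [hwag t ht]
    exact hZ ih (hw t ht) (sub_nonneg.2 (hα t ht).2) (hα t ht).1 (sub_add_cancel _ _)

/-- The function `Q(v, u) = G(v) - G(u) + ⟨H(u), v - u⟩ + J(v) - J(u)`, which measures the violation
at the test point `u` of the variational inequality with potential `G`, operator `H` and simple
term `J`. The values of `H` are linear functionals, not assumed continuous. -/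
def gapFunction (G : E → ℝ) (H : E → E →ₗ[ℝ] ℝ) (J : E → ℝ) (v u : E) : ℝ :=
  G v - G u + H u (v - u) + J v - J u

theorem gapFunction_average_sub (G : E → ℝ) (H : E → E →ₗ[ℝ] ℝ) (J : E → ℝ) (a : ℝ) (y v u : E) :
    gapFunction G H J ((1 - a) • y + a • v) u - (1 - a) * gapFunction G H J y u =
      (G ((1 - a) • y + a • v) - (1 - a) * G y - a * G u) + a * H u (v - u) +
        (J ((1 - a) • y + a • v) - (1 - a) * J y - a * J u) := by
  simp only [gapFunction, map_sub, map_add, map_smul, smul_eq_mul]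
  ring

end Averaging

section OneStep

variable {E : Type*} [SeminormedAddCommGroup E] [NormedSpace ℝ E] {Z : Set E}
  {G J : E → ℝ} {DG H : E → E →ₗ[ℝ] ℝ} {L : ℝ}

theorem norm_average_sub_average_sq (a : ℝ) (y v r : E) :
    ‖((1 - a) • y + a • v) - ((1 - a) • y + a • r)‖ ^ 2 = a ^ 2 * ‖v - r‖ ^ 2 := by
  rw [add_sub_add_left_eq_sub, ← smul_sub, norm_smul, mul_pow, Real.norm_eq_abs, sq_abs]

theorem average_le_of_smooth_of_convex (hZ : Convex ℝ Z)
    (hsmooth : ∀ v ∈ Z, ∀ x ∈ Z, G v ≤ G x + DG x (v - x) + L / 2 * ‖v - x‖ ^ 2)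
    (hconvex : ∀ v ∈ Z, ∀ x ∈ Z, G x + DG x (v - x) ≤ G v)
    {a : ℝ} (ha₀ : 0 ≤ a) (ha₁ : a ≤ 1) {y r v u : E}
    (hy : y ∈ Z) (hr : r ∈ Z) (hv : v ∈ Z) (hu : u ∈ Z) :
    G ((1 - a) • y + a • v) ≤ (1 - a) * G y + a * G u +
      a * DG ((1 - a) • y + a • r) (v - u) + L * a ^ 2 / 2 * ‖v - r‖ ^ 2 := by
  have ha₁' : 0 ≤ 1 - a := sub_nonneg.2 ha₁
  have average_mem {p : E} (hp : p ∈ Z) : (1 - a) • y + a • p ∈ Z :=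
    hZ hy hp ha₁' ha₀ (sub_add_cancel _ _)
  have hx := average_mem hr
  have hz := average_mem hv
  have hnorm := norm_average_sub_average_sq a y v r
  set x := (1 - a) • y + a • r
  set z := (1 - a) • y + a • v with z_def
  have hsplit : G x + DG x (z - x) =
      (1 - a) * (G x + DG x (y - x)) + a * (G x + DG x (u - x)) + a * DG x (v - u) := by
    simp only [z_def, map_sub, map_add, map_smul, smul_eq_mul]
    ring
  calc G z ≤ G x + DG x (z - x) + L / 2 * ‖z - x‖ ^ 2 := hsmooth z hz x hx
    _ = (1 - a) * (G x + DG x (y - x)) + a * (G x + DG x (u - x)) + a * DG x (v - u) +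
          L * a ^ 2 / 2 * ‖v - r‖ ^ 2 := by rw [hsplit, hnorm]; ring
    _ ≤ (1 - a) * G y + a * G u + a * DG x (v - u) + L * a ^ 2 / 2 * ‖v - r‖ ^ 2 := by
      gcongr
      · exact hconvex y hy x hx
      · exact hconvex u hu x hx

theorem gapFunction_average_sub_le (hJ : ConvexOn ℝ Z J)
    (hsmooth : ∀ v ∈ Z, ∀ x ∈ Z, G v ≤ G x + DG x (v - x) + L / 2 * ‖v - x‖ ^ 2)
    (hconvex : ∀ v ∈ Z, ∀ x ∈ Z, G x + DG x (v - x) ≤ G v)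
    (hmono : ∀ v ∈ Z, ∀ x ∈ Z, 0 ≤ (H x - H v) (x - v))
    {a : ℝ} (ha₀ : 0 ≤ a) (ha₁ : a ≤ 1) {y r v u : E}
    (hy : y ∈ Z) (hr : r ∈ Z) (hv : v ∈ Z) (hu : u ∈ Z) :
    gapFunction G H J ((1 - a) • y + a • v) u - (1 - a) * gapFunction G H J y u ≤
      a * DG ((1 - a) • y + a • r) (v - u) + L * a ^ 2 / 2 * ‖v - r‖ ^ 2 +
        a * H v (v - u) + a * J v - a * J u := by
  have hG_average :=
    average_le_of_smooth_of_convex hJ.1 hsmooth hconvex ha₀ ha₁ hy hr hv hu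
  have hH_swap : a * H u (v - u) ≤ a * H v (v - u) :=
    mul_le_mul_of_nonneg_left (sub_nonneg.1 (hmono u hu v hv)) ha₀
  have hJ_average : J ((1 - a) • y + a • v) ≤ (1 - a) * J y + a * J v :=
    hJ.2 hy hv (sub_nonneg.2 ha₁) ha₀ (sub_add_cancel _ _)
  rw [gapFunction_average_sub]
  linarith

theorem Q_one_step_recursion_general (hJ : ConvexOn ℝ Z J)
    (hsmooth : ∀ v ∈ Z, ∀ x ∈ Z, G v ≤ G x + DG x (v - x) + L / 2 * ‖v - x‖ ^ 2)
    (hconvex : ∀ v ∈ Z, ∀ x ∈ Z, G x + DG x (v - x) ≤ G v)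
    (hmono : ∀ v ∈ Z, ∀ x ∈ Z, 0 ≤ (H x - H v) (x - v))
    {α : ℕ → ℝ} (hα : ∀ t ≥ 1, 0 ≤ α t ∧ α t ≤ 1) {r w wag wmd : ℕ → E}
    (hr : ∀ t ≥ 1, r t ∈ Z) (hw : ∀ t ≥ 1, w (t + 1) ∈ Z) (hwag₁ : wag 1 ∈ Z)
    (hwmd : ∀ t ≥ 1, wmd t = (1 - α t) • wag t + α t • r t)
    (hwag : ∀ t ≥ 1, wag (t + 1) = (1 - α t) • wag t + α t • w (t + 1)) :
    ∀ t ≥ 1, ∀ u ∈ Z,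
      gapFunction G H J (wag (t + 1)) u - (1 - α t) * gapFunction G H J (wag t) u ≤
        α t * DG (wmd t) (w (t + 1) - u) + L * α t ^ 2 / 2 * ‖w (t + 1) - r t‖ ^ 2 +
          α t * H (w (t + 1)) (w (t + 1) - u) + α t * J (w (t + 1)) - α t * J u := by
  intro t ht u hu
  have hwag_mem : wag t ∈ Z := average_iterate_mem hJ.1 hα hw hwag₁ hwag t ht
  rw [hwag t ht, hwmd t ht]
  exact gapFunction_average_sub_le hJ hsmooth hconvex hmono (hα t ht).1 (hα t ht).2
    hwag_mem (hr t ht) (hw t ht) hu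

end OneStep

open Finset in
/-- one-step recursion for the function `Q` along the aggregate iterates. -/
theorem Q_one_step_recursion
    {E : Type*} [NormedAddCommGroup E] [NormedSpace ℝ E] [FiniteDimensional ℝ E]
    (Z : Set E) (hZne : Z.Nonempty) (hZcl : IsClosed Z) (hZcv : Convex ℝ Z)
    (J : E → ℝ) (hJ : ConvexOn ℝ Z J)
    (G : E → ℝ) (DG : E → E →L[ℝ] ℝ) (LG : ℝ) (hLG : 0 ≤ LG)
    (hGsmooth : ∀ v ∈ Z, ∀ x ∈ Z, G v ≤ G x + DG x (v - x) + LG / 2 * ‖v - x‖ ^ 2)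
    (hGcvx : ∀ v ∈ Z, ∀ x ∈ Z, G x + DG x (v - x) ≤ G v)
    (H : E → E →L[ℝ] ℝ) (LH : ℝ) (hLH : 0 ≤ LH)
    (hHmono : ∀ v ∈ Z, ∀ x ∈ Z, 0 ≤ (H x - H v) (x - v))
    (hHlip : ∀ v ∈ Z, ∀ x ∈ Z, ‖H x - H v‖ ≤ LH * ‖x - v‖)
    (Q : E → E → ℝ)
    (hQ : ∀ a b, Q a b = G a - G b + (H b) (a - b) + J a - J b)
    (α : ℕ → ℝ) (hαrange : ∀ t ≥ 1, 0 ≤ α t ∧ α t ≤ 1)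
    (r w wag wmd : ℕ → E)
    (hrZ : ∀ t ≥ 1, r t ∈ Z) (hwZ : ∀ t ≥ 1, w t ∈ Z)
    (hwag1 : wag 1 = w 1)
    (hwmd : ∀ t ≥ 1, wmd t = (1 - α t) • wag t + α t • r t)
    (hwagrec : ∀ t ≥ 1, wag (t+1) = (1 - α t) • wag t + α t • w (t+1)) :
    ∀ t ≥ 1, ∀ u ∈ Z,
      Q (wag (t+1)) u - (1 - α t) * Q (wag t) u ≤
        α t * (DG (wmd t)) (w (t+1) - u) + LG * α t ^ 2 / 2 * ‖w (t+1) - r t‖ ^ 2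
          + α t * (H (w (t+1))) (w (t+1) - u) + α t * J (w (t+1)) - α t * J u := by
  obtain rfl : Q = gapFunction G (fun x => (H x : E →ₗ[ℝ] ℝ)) J := funext₂ hQ
  exact Q_one_step_recursion_general (DG := fun x => (DG x : E →ₗ[ℝ] ℝ)) hJ hGsmooth hGcvx hHmono
    hαrange hrZ (fun t _ => hwZ (t + 1) (by lia)) (hwag1 ▸ hwZ 1 le_rfl) hwmd hwagrec
end

section
/- Suppose L_H > 0, a strong solution u* of VI(Z;G,H,J) exists, D := ‖r_1 − u*‖, an integer N ≥ 2 is given, and the AMP parameters are α_t = 2/(t+1) and γ_t = t/(3(L_G + L_H N)). Then there exists v_N ∈ E with g̃(w_N^{ag}, v_N) ≤ ε_N, where ‖v_N‖ ≤ [12L_G/(N(N−1)) + 12L_H/(N−1)] D and ε_N ≤ [45L_G/(N(N−1)) + 45L_H/(N−1)] D². -/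
/-
The excess `Q(a, u)` is controlled along the run by the energy `A t * Q(wᵃᵍ t, u) + ‖r t - u‖² / 2`,
whose weights satisfy `A t = (1 - α t) A (t + 1)` and `γ t = α t * A (t + 1)`. The two prox steps
form an extragradient step whose error `‖γ (H r - H w)‖² / 2`, together with the smoothness error
of `G`, is absorbed by `-‖r - w‖² / 2`; hence the energy does not increase, for every `u ∈ Z`.
For `u = u*` the excess is nonnegative, so all iterates stay within a multiple of `‖r 1 - u*‖`, even
though `Z` is unbounded. For arbitrary `u`, polarization turns `‖r 1 - u‖² - ‖r N - u‖²` into the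
linear term `2⟪r 1 - r N, wᵃᵍ N - u⟫`, which becomes the perturbation `⟪v, wᵃᵍ N - u⟫`, plus a
quantity bounded independently of `u`.
-/

namespace AMP

open Filter Topology
open scoped RealInnerProductSpace

theorem add_modulus_le_of_isMinOn {E : Type*} [NormedAddCommGroup E] [NormedSpace ℝ E]
    {Z : Set E} {φ : ℝ → ℝ} {f : E → ℝ} {w u : E} (hf : UniformConvexOn Z φ f)
    (hmin : IsMinOn f Z w) (hw : w ∈ Z) (hu : u ∈ Z) : f w + φ ‖u - w‖ ≤ f u := by
  have damped : ∀ s ∈ Set.Ioo (0 : ℝ) 1, (1 - s) * φ ‖u - w‖ ≤ f u - f w := by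
    rintro s ⟨hs0, hs1⟩
    have hs1' : 0 ≤ 1 - s := by linarith
    have hconv := hf.2 hu hw hs0.le hs1' (by ring)
    have hle : f w ≤ f (s • u + (1 - s) • w) := hmin (hf.1 hu hw hs0.le hs1' (by ring))
    simp only [smul_eq_mul] at hconv
    refine le_of_mul_le_mul_left ?_ hs0
    linarith
  have hlim : Tendsto (fun s : ℝ ↦ (1 - s) * φ ‖u - w‖) (𝓝[>] 0) (𝓝 (φ ‖u - w‖)) := by
    have : ContinuousAt (fun s : ℝ ↦ (1 - s) * φ ‖u - w‖) 0 := by fun_prop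
    simpa using! this.tendsto.mono_left nhdsWithin_le_nhds
  have := le_of_tendsto hlim
    (eventually_of_mem (Ioo_mem_nhdsGT zero_lt_one) damped)
  linarith

variable {E : Type*} [NormedAddCommGroup E] [InnerProductSpace ℝ E]

theorem norm_sub_sq_sub_norm_sub_sq (x y a u : E) :
    ‖x - u‖ ^ 2 - ‖y - u‖ ^ 2 = ‖x - a‖ ^ 2 - ‖y - a‖ ^ 2 + 2 * ⟪x - y, a - u⟫ := by
  rw [← sub_add_sub_cancel x a u, ← sub_add_sub_cancel y a u, norm_add_sq_real, norm_add_sq_real,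
    ← sub_sub_sub_cancel_right x y a, inner_sub_left (x - a)]
  ring

section Prox

variable {Z : Set E} {J : E → ℝ} {r η ζ w r' u : E}

/-- The objective minimized by the prox-mapping `P_r^J(η)` for the Euclidean Bregman divergence. -/
noncomputable def proxObjective (J : E → ℝ) (r η u : E) : ℝ :=
  ⟪η, u - r⟫ + ‖u - r‖ ^ 2 / 2 + J u

/-- `w = P_r^J(η)` on `Z`, as a predicate: `w` is a minimizer, whose existence is not asserted. -/
def IsProxPoint (Z : Set E) (J : E → ℝ) (r η w : E) : Prop :=
  w ∈ Z ∧ IsMinOn (proxObjective J r η) Z w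

theorem strongConvexOn_proxObjective (hJ : ConvexOn ℝ Z J) (r η : E) :
    StrongConvexOn Z 1 (proxObjective J r η) := by
  have hsplit : (fun u ↦ proxObjective J r η u - 1 / 2 * ‖u‖ ^ 2) =
      fun u ↦ J u + ⟪η - r, u⟫ + (‖r‖ ^ 2 / 2 - ⟪η, r⟫) := by
    funext u
    rw [proxObjective, norm_sub_sq_real, inner_sub_right, inner_sub_left, real_inner_comm u r]
    ring
  rw [strongConvexOn_iff_convex, hsplit]
  exact (hJ.add ((innerₗ E (η - r)).convexOn hJ.1)).add_const _

theorem IsProxPoint.inner_add_le (hw : IsProxPoint Z J r η w) (hJ : ConvexOn ℝ Z J) (hu : u ∈ Z) :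
    ⟪η, w - u⟫ + J w - J u ≤ ‖r - u‖ ^ 2 / 2 - ‖w - u‖ ^ 2 / 2 - ‖r - w‖ ^ 2 / 2 := by
  have hgrowth := add_modulus_le_of_isMinOn (strongConvexOn_proxObjective hJ r η) hw.2 hw.1 hu
  have hinner : ⟪η, w - u⟫ = ⟪η, w - r⟫ - ⟪η, u - r⟫ := by
    rw [← inner_sub_right, sub_sub_sub_cancel_right]
  simp only [proxObjective] at hgrowth
  rw [norm_sub_rev r u, norm_sub_rev r w, norm_sub_rev w u]
  linarith

theorem extragradient_inner_add_le (hJ : ConvexOn ℝ Z J) (hw : IsProxPoint Z J r η w)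
    (hr' : IsProxPoint Z J r ζ r') (hu : u ∈ Z) :
    ⟪ζ, w - u⟫ + J w - J u ≤
      ‖r - u‖ ^ 2 / 2 - ‖r' - u‖ ^ 2 / 2 - ‖r - w‖ ^ 2 / 2 + ‖ζ - η‖ ^ 2 / 2 := by
  have predictor := hw.inner_add_le hJ hr'.1
  have corrector := hr'.inner_add_le hJ hu
  have young : ⟪ζ - η, w - r'⟫ ≤ ‖ζ - η‖ ^ 2 / 2 + ‖w - r'‖ ^ 2 / 2 := by
    linarith [real_inner_le_norm (ζ - η) (w - r'), two_mul_le_add_sq ‖ζ - η‖ ‖w - r'‖]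
  have hinner : ⟪ζ, w - u⟫ = ⟪η, w - r'⟫ + ⟪ζ, r' - u⟫ + ⟪ζ - η, w - r'⟫ := by
    simp only [inner_sub_left, inner_sub_right]
    ring
  linarith

end Prox

variable {Z : Set E} {G J : E → ℝ} {DG H : E → E} {LG LH : ℝ}

/-- `G` is convex and `L`-smooth on `Z` with gradient `DG`. Only the two inequalities that `DG`
satisfies on `Z` are recorded, as `Z` may have empty interior. -/
structure IsSmoothConvexOn (Z : Set E) (G : E → ℝ) (DG : E → E) (L : ℝ) : Prop where
  le_add : ∀ v ∈ Z, ∀ x ∈ Z, G v ≤ G x + ⟪DG x, v - x⟫ + L / 2 * ‖v - x‖ ^ 2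
  add_le : ∀ v ∈ Z, ∀ x ∈ Z, G x + ⟪DG x, v - x⟫ ≤ G v

/-- The standing assumptions on the composite variational inequality `VI(Z; G, H, J)`. -/
structure IsCompositeVI (Z : Set E) (G J : E → ℝ) (DG H : E → E) (LG LH : ℝ) : Prop where
  convexOn : ConvexOn ℝ Z J
  smooth : IsSmoothConvexOn Z G DG LG
  monotone : ∀ v ∈ Z, ∀ x ∈ Z, 0 ≤ ⟪H x - H v, x - v⟫
  lipschitz : ∀ v ∈ Z, ∀ x ∈ Z, ‖H x - H v‖ ≤ LH * ‖x - v‖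

/-- The function `Q(a, u)` whose supremum over `u ∈ Z` is the gap of `VI(Z; G, H, J)` at `a`. -/
def excess (G J : E → ℝ) (H : E → E) (a u : E) : ℝ :=
  G a - G u + ⟪H u, a - u⟫ + J a - J u

theorem excess_nonneg_of_strong_solution {ustar J' a : E}
    (hG : G ustar + ⟪DG ustar, a - ustar⟫ ≤ G a) (hJ' : J ustar + ⟪J', a - ustar⟫ ≤ J a)
    (hstrong : ⟪DG ustar + H ustar + J', ustar - a⟫ ≤ 0) : 0 ≤ excess G J H a ustar := by
  rw [← neg_sub a ustar, inner_neg_right, inner_add_left, inner_add_left] at hstrong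
  rw [excess]
  linarith

section OneStep

variable {α A : ℝ} {ag r w r' u : E}

theorem IsSmoothConvexOn.le_of_convex_comb (hG : IsSmoothConvexOn Z G DG LG) (hZ : Convex ℝ Z)
    (hα : α ∈ Set.Icc 0 1) (hag : ag ∈ Z) (hr : r ∈ Z) (hw : w ∈ Z) (hu : u ∈ Z) :
    G ((1 - α) • ag + α • w) ≤ (1 - α) * G ag +
      α * (G u + ⟪DG ((1 - α) • ag + α • r), w - u⟫) + LG / 2 * (α ^ 2 * ‖r - w‖ ^ 2) := by
  obtain ⟨hα0, hα1⟩ := hα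
  have hα1' : 0 ≤ 1 - α := by linarith
  have hmd : (1 - α) • ag + α • r ∈ Z := hZ hag hr hα1' hα0 (by ring)
  have upper := hG.le_add _ (hZ hag hw hα1' hα0 (by ring)) _ hmd
  have lower_ag := mul_le_mul_of_nonneg_left (hG.add_le ag hag _ hmd) hα1'
  have lower_u := mul_le_mul_of_nonneg_left (hG.add_le u hu _ hmd) hα0
  have hdist : ‖(1 - α) • ag + α • w - ((1 - α) • ag + α • r)‖ ^ 2 = α ^ 2 * ‖r - w‖ ^ 2 := by
    rw [add_sub_add_left_eq_sub, ← smul_sub, norm_smul, mul_pow, Real.norm_eq_abs, sq_abs,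
      norm_sub_rev]
  rw [hdist] at upper
  set md := (1 - α) • ag + α • r
  have hinner : ⟪DG md, (1 - α) • ag + α • w - md⟫ =
      (1 - α) * ⟪DG md, ag - md⟫ + α * ⟪DG md, u - md⟫ + α * ⟪DG md, w - u⟫ := by
    simp only [← inner_smul_right, ← inner_add_right]
    congr 1
    module
  linarith

theorem IsCompositeVI.excess_le_of_convex_comb (hP : IsCompositeVI Z G J DG H LG LH)
    (hα : α ∈ Set.Icc 0 1) (hag : ag ∈ Z) (hr : r ∈ Z) (hw : w ∈ Z) (hu : u ∈ Z) :
    excess G J H ((1 - α) • ag + α • w) u ≤ (1 - α) * excess G J H ag u +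
      α * (⟪H w + DG ((1 - α) • ag + α • r), w - u⟫ + J w - J u) +
      LG / 2 * (α ^ 2 * ‖r - w‖ ^ 2) := by
  have hG := hP.smooth.le_of_convex_comb hP.convexOn.1 hα hag hr hw hu
  have hJ := hP.convexOn.2 hag hw (sub_nonneg.2 hα.2) hα.1 (by ring)
  have hH := mul_le_mul_of_nonneg_left (hP.monotone u hu w hw) hα.1
  have hinner : ⟪H u, (1 - α) • ag + α • w - u⟫ = (1 - α) * ⟪H u, ag - u⟫ + α * ⟪H u, w - u⟫ := by
    simp only [← inner_smul_right, ← inner_add_right]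
    congr 1
    module
  simp only [smul_eq_mul] at hJ
  rw [inner_sub_left] at hH
  simp only [excess, hinner, inner_add_left]
  linarith

theorem IsCompositeVI.weighted_excess_step (hP : IsCompositeVI Z G J DG H LG LH)
    (hα : α ∈ Set.Icc 0 1) (hA : 0 ≤ A) (hag : ag ∈ Z) (hr : r ∈ Z)
    (hw : IsProxPoint Z ((α * A) • J) r ((α * A) • (H r + DG ((1 - α) • ag + α • r))) w)
    (hr' : IsProxPoint Z ((α * A) • J) r ((α * A) • (H w + DG ((1 - α) • ag + α • r))) r')
    (hu : u ∈ Z) :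
    A * excess G J H ((1 - α) • ag + α • w) u ≤ (1 - α) * A * excess G J H ag u +
      ‖r - u‖ ^ 2 / 2 - ‖r' - u‖ ^ 2 / 2 -
      (1 - (LG * α * (α * A) + LH ^ 2 * (α * A) ^ 2)) / 2 * ‖r - w‖ ^ 2 := by
  have hαA : 0 ≤ α * A := mul_nonneg hα.1 hA
  have hcomb := mul_le_mul_of_nonneg_left (hP.excess_le_of_convex_comb hα hag hr hw.1 hu) hA
  have hextra := extragradient_inner_add_le (hP.convexOn.smul hαA) hw hr' hu
  rw [← smul_sub, add_sub_add_right_eq_sub, norm_smul, Real.norm_of_nonneg hαA,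
    real_inner_smul_left] at hextra
  simp only [smul_eq_mul] at hextra
  have hlip : (α * A * ‖H w - H r‖) ^ 2 ≤ LH ^ 2 * (α * A) ^ 2 * ‖r - w‖ ^ 2 := by
    have : α * A * ‖H w - H r‖ ≤ α * A * (LH * ‖r - w‖) := by
      rw [norm_sub_rev r w]
      gcongr
      exact hP.lipschitz r hr w hw.1
    calc _ ≤ (α * A * (LH * ‖r - w‖)) ^ 2 := by gcongr
      _ = _ := by ring
  linarith

end OneStep

/-- The iterates of the accelerated mirror-prox method, indexed from `1`. -/
structure IsIterates (Z : Set E) (J : E → ℝ) (DG H : E → E) (α γ : ℕ → ℝ)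
    (r w wag wmd : ℕ → E) : Prop where
  mem_one : r 1 ∈ Z
  wag_one : wag 1 = r 1
  wmd_eq : ∀ t ≥ 1, wmd t = (1 - α t) • wag t + α t • r t
  prox_w : ∀ t ≥ 1, IsProxPoint Z (γ t • J) (r t) (γ t • (H (r t) + DG (wmd t))) (w (t + 1))
  prox_r : ∀ t ≥ 1, IsProxPoint Z (γ t • J) (r t) (γ t • (H (w (t + 1)) + DG (wmd t))) (r (t + 1))
  wag_succ : ∀ t ≥ 1, wag (t + 1) = (1 - α t) • wag t + α t • w (t + 1)

/-- Stepsizes for which the energy `A t * excess (wag t) u + ‖r t - u‖ ^ 2 / 2` does not increase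
up to time `N`. The weights are `A (t + 1) = γ t / α t`, written without division; in terms of the
usual `Γ t = ∏ (1 - α s)` over `2 ≤ s ≤ t` they are `A (t + 1) = γ 1 / Γ t`. The constant `c` bounds
the fraction of `‖r t - w (t + 1)‖ ^ 2 / 2` lost to the errors of `G` and `H`. -/
structure IsStepsize (LG LH c : ℝ) (N : ℕ) (α γ A : ℕ → ℝ) : Prop where
  mem_Icc : ∀ t ≥ 1, α t ∈ Set.Icc 0 1
  weight_nonneg : ∀ t ≥ 1, 0 ≤ A t
  weight_one : A 1 = 0
  weight_eq : ∀ t ≥ 1, A t = (1 - α t) * A (t + 1)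
  eq_mul_weight : ∀ t ≥ 1, γ t = α t * A (t + 1)
  error_le : ∀ t ≥ 1, t < N → LG * α t * γ t + LH ^ 2 * γ t ^ 2 ≤ c

section Iterates

variable {α γ A : ℕ → ℝ} {r w wag wmd : ℕ → E} {c : ℝ} {N t : ℕ} {u ustar : E}

theorem IsIterates.r_mem (hX : IsIterates Z J DG H α γ r w wag wmd) (ht : 1 ≤ t) : r t ∈ Z := by
  induction t, ht using Nat.le_induction with
  | base => exact hX.mem_one
  | succ t ht _ => exact (hX.prox_r t ht).1

theorem IsIterates.wag_mem (hX : IsIterates Z J DG H α γ r w wag wmd) (hZ : Convex ℝ Z)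
    (hα : ∀ t ≥ 1, α t ∈ Set.Icc 0 1) (ht : 1 ≤ t) : wag t ∈ Z := by
  induction t, ht using Nat.le_induction with
  | base => exact hX.wag_one ▸ hX.mem_one
  | succ t ht ih =>
    rw [hX.wag_succ t ht]
    exact hZ ih (hX.prox_w t ht).1 (sub_nonneg.2 (hα t ht).2) (hα t ht).1 (by ring)

theorem energy_succ_le (hP : IsCompositeVI Z G J DG H LG LH)
    (hX : IsIterates Z J DG H α γ r w wag wmd) (hS : IsStepsize LG LH c N α γ A)
    (ht : 1 ≤ t) (htN : t < N) (hu : u ∈ Z) :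
    A (t + 1) * excess G J H (wag (t + 1)) u + ‖r (t + 1) - u‖ ^ 2 / 2 +
        (1 - c) / 2 * ‖r t - w (t + 1)‖ ^ 2 ≤
      A t * excess G J H (wag t) u + ‖r t - u‖ ^ 2 / 2 := by
  have hw := hX.prox_w t ht
  have hr := hX.prox_r t ht
  rw [hX.wmd_eq t ht, hS.eq_mul_weight t ht] at hw hr
  have hstep := hP.weighted_excess_step (hS.mem_Icc t ht) (hS.weight_nonneg (t + 1) (by omega))
    (hX.wag_mem hP.convexOn.1 hS.mem_Icc ht) (hX.r_mem ht) hw hr hu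
  rw [← hX.wag_succ t ht, ← hS.eq_mul_weight t ht, ← hS.weight_eq t ht] at hstep
  have herror := mul_le_mul_of_nonneg_right (hS.error_le t ht htN) (sq_nonneg ‖r t - w (t + 1)‖)
  linarith

theorem energy_le (hP : IsCompositeVI Z G J DG H LG LH)
    (hX : IsIterates Z J DG H α γ r w wag wmd) (hS : IsStepsize LG LH c N α γ A) (hc : c ≤ 1)
    (ht : 1 ≤ t) (htN : t ≤ N) (hu : u ∈ Z) :
    A t * excess G J H (wag t) u + ‖r t - u‖ ^ 2 / 2 ≤ ‖r 1 - u‖ ^ 2 / 2 := by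
  induction t, ht using Nat.le_induction with
  | base => simp [hS.weight_one]
  | succ t ht ih =>
    have hdecr := energy_succ_le hP hX hS ht htN hu
    have : 0 ≤ (1 - c) / 2 * ‖r t - w (t + 1)‖ ^ 2 :=
      mul_nonneg (by linarith) (sq_nonneg _)
    linarith [ih (by omega)]

theorem norm_r_sub_le (hP : IsCompositeVI Z G J DG H LG LH)
    (hX : IsIterates Z J DG H α γ r w wag wmd) (hS : IsStepsize LG LH c N α γ A) (hc : c ≤ 1)
    (hustar : ustar ∈ Z) (hsol : ∀ a ∈ Z, 0 ≤ excess G J H a ustar)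
    (ht : 1 ≤ t) (htN : t ≤ N) : ‖r t - ustar‖ ≤ ‖r 1 - ustar‖ := by
  have henergy := energy_le hP hX hS hc ht htN hustar
  have hexcess : 0 ≤ A t * excess G J H (wag t) ustar :=
    mul_nonneg (hS.weight_nonneg t ht) (hsol _ (hX.wag_mem hP.convexOn.1 hS.mem_Icc ht))
  exact le_of_sq_le_sq (by linarith) (norm_nonneg _)

theorem norm_r_sub_w_le (hP : IsCompositeVI Z G J DG H LG LH)
    (hX : IsIterates Z J DG H α γ r w wag wmd) (hS : IsStepsize LG LH c N α γ A) (hc : c < 1)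
    (hustar : ustar ∈ Z) (hsol : ∀ a ∈ Z, 0 ≤ excess G J H a ustar)
    (ht : 1 ≤ t) (htN : t < N) : ‖r t - w (t + 1)‖ ≤ ‖r 1 - ustar‖ / √(1 - c) := by
  have hc' : 0 < 1 - c := sub_pos.2 hc
  have hdecr := energy_succ_le hP hX hS ht htN hustar
  have henergy := energy_le hP hX hS hc.le ht htN.le hustar
  have hexcess : 0 ≤ A (t + 1) * excess G J H (wag (t + 1)) ustar :=
    mul_nonneg (hS.weight_nonneg _ (by omega))
      (hsol _ (hX.wag_mem hP.convexOn.1 hS.mem_Icc (by omega)))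
  refine le_of_sq_le_sq ?_ (by positivity)
  rw [div_pow, Real.sq_sqrt hc'.le, le_div_iff₀ hc']
  linarith [sq_nonneg ‖r (t + 1) - ustar‖]

theorem norm_wag_sub_le (hP : IsCompositeVI Z G J DG H LG LH)
    (hX : IsIterates Z J DG H α γ r w wag wmd) (hS : IsStepsize LG LH c N α γ A) (hc : c < 1)
    (hustar : ustar ∈ Z) (hsol : ∀ a ∈ Z, 0 ≤ excess G J H a ustar)
    (ht : 1 ≤ t) (htN : t ≤ N) : ‖wag t - r 1‖ ≤ (2 + 1 / √(1 - c)) * ‖r 1 - ustar‖ := by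
  rw [← mem_closedBall_iff_norm]
  induction t, ht using Nat.le_induction with
  | base =>
    rw [hX.wag_one]
    exact Metric.mem_closedBall_self (by positivity)
  | succ t ht ih =>
    have hα := hS.mem_Icc t ht
    rw [hX.wag_succ t ht]
    refine convex_closedBall _ _ (ih (by omega)) ?_ (sub_nonneg.2 hα.2) hα.1 (by ring)
    rw [Metric.mem_closedBall]
    calc dist (w (t + 1)) (r 1)
        ≤ dist (w (t + 1)) (r t) + dist (r t) ustar + dist ustar (r 1) := dist_triangle4 _ _ _ _
      _ = ‖r t - w (t + 1)‖ + ‖r t - ustar‖ + ‖r 1 - ustar‖ := by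
        rw [dist_eq_norm', dist_eq_norm, dist_eq_norm']
      _ ≤ ‖r 1 - ustar‖ / √(1 - c) + ‖r 1 - ustar‖ + ‖r 1 - ustar‖ := by
        gcongr
        · exact norm_r_sub_w_le hP hX hS hc hustar hsol ht htN
        · exact norm_r_sub_le hP hX hS hc.le hustar hsol ht (by omega)
      _ = (2 + 1 / √(1 - c)) * ‖r 1 - ustar‖ := by ring

theorem excess_sub_inner_le (hP : IsCompositeVI Z G J DG H LG LH)
    (hX : IsIterates Z J DG H α γ r w wag wmd) (hS : IsStepsize LG LH c N α γ A) (hc : c ≤ 1)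
    (hN : 1 ≤ N) (hA : 0 < A N) (hu : u ∈ Z) :
    excess G J H (wag N) u - ⟪(A N)⁻¹ • (r 1 - r N), wag N - u⟫ ≤
      ‖wag N - r 1‖ ^ 2 / (2 * A N) := by
  have henergy := energy_le hP hX hS hc hN le_rfl hu
  have hpolar := norm_sub_sq_sub_norm_sub_sq (r 1) (r N) (wag N) u
  rw [norm_sub_rev (wag N), le_div_iff₀ (by positivity), real_inner_smul_left]
  calc _ = 2 * (A N * excess G J H (wag N) u) - 2 * ⟪r 1 - r N, wag N - u⟫ := by field_simp
    _ ≤ ‖r 1 - wag N‖ ^ 2 := by linarith [sq_nonneg ‖r N - wag N‖]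

theorem exists_perturbation (hP : IsCompositeVI Z G J DG H LG LH)
    (hX : IsIterates Z J DG H α γ r w wag wmd) (hS : IsStepsize LG LH c N α γ A) (hc : c < 1)
    (hustar : ustar ∈ Z) (hsol : ∀ a ∈ Z, 0 ≤ excess G J H a ustar) (hN : 1 ≤ N) (hA : 0 < A N) :
    ∃ v : E, ‖v‖ ≤ 2 / A N * ‖r 1 - ustar‖ ∧ ∀ u ∈ Z,
      excess G J H (wag N) u - ⟪v, wag N - u⟫ ≤
        (2 + 1 / √(1 - c)) ^ 2 / (2 * A N) * ‖r 1 - ustar‖ ^ 2 := by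
  refine ⟨(A N)⁻¹ • (r 1 - r N), ?_, fun u hu ↦ ?_⟩
  · have hr := norm_r_sub_le hP hX hS hc.le hustar hsol hN le_rfl
    have htri := norm_sub_le_norm_sub_add_norm_sub (r 1) ustar (r N)
    rw [norm_sub_rev ustar] at htri
    calc ‖(A N)⁻¹ • (r 1 - r N)‖ = (A N)⁻¹ * ‖r 1 - r N‖ := by
          rw [norm_smul, Real.norm_of_nonneg (by positivity)]
      _ ≤ (A N)⁻¹ * (2 * ‖r 1 - ustar‖) := by gcongr; linarith
      _ = 2 / A N * ‖r 1 - ustar‖ := by ring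
  · calc _ ≤ ‖wag N - r 1‖ ^ 2 / (2 * A N) := excess_sub_inner_le hP hX hS hc.le hN hA hu
      _ ≤ ((2 + 1 / √(1 - c)) * ‖r 1 - ustar‖) ^ 2 / (2 * A N) := by
        gcongr
        exact norm_wag_sub_le hP hX hS hc hustar hsol hN le_rfl
      _ = _ := by ring

end Iterates

section SpecificSteps

theorem stepsize_error_le {t K : ℝ} (hLG : 0 ≤ LG) (hLH : 0 ≤ LH) (hM : 0 < LG + LH * K)
    (ht : 0 ≤ t) (htK : t ≤ K) :
    LG * (2 / (t + 1)) * (t / (3 * (LG + LH * K))) + LH ^ 2 * (t / (3 * (LG + LH * K))) ^ 2 ≤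
      2 / 3 := by
  -- `p = LG / M` and `q = LH * K / M` sum to `1`; the errors are at most `2 p / 3` and `q ^ 2 / 9`.
  generalize hM_eq : LG + LH * K = M at hM ⊢
  have hsmooth : LG * (2 / (t + 1)) * (t / (3 * M)) ≤ 2 / 3 * (LG / M) := by
    have hle : t / (t + 1) ≤ 1 := (div_le_one (by linarith)).2 (by linarith)
    calc _ = 2 / 3 * (LG / M) * (t / (t + 1)) := by field_simp
      _ ≤ _ := mul_le_of_le_one_right (by positivity) hle
  have hLHK : 0 ≤ LH * K := mul_nonneg hLH (ht.trans htK)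
  have hlip : LH ^ 2 * (t / (3 * M)) ^ 2 ≤ (LH * K / M) ^ 2 / 9 := by
    calc _ = (LH * t / M) ^ 2 / 9 := by ring
      _ ≤ _ := by gcongr
  have hq0 : 0 ≤ LH * K / M := div_nonneg hLHK hM.le
  have hq1 : LH * K / M ≤ 1 := (div_le_one hM).2 (by linarith)
  have hsum : LG / M + LH * K / M = 1 := by rw [← add_div, hM_eq, div_self hM.ne']
  linarith [mul_le_of_le_one_left hq0 hq1, sq (LH * K / M)]

theorem isStepsize_specific {α γ : ℕ → ℝ} {N : ℕ} (hLG : 0 ≤ LG) (hLH : 0 ≤ LH)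
    (hM : 0 < LG + LH * N) (hα : ∀ t ≥ 1, α t = 2 / ((t : ℝ) + 1))
    (hγ : ∀ t ≥ 1, γ t = (t : ℝ) / (3 * (LG + LH * N))) :
    IsStepsize LG LH (2 / 3) N α γ fun t ↦ (t : ℝ) * (t - 1) / (6 * (LG + LH * N)) where
  mem_Icc t ht := by
    have ht' : (1 : ℝ) ≤ t := by exact_mod_cast ht
    rw [hα t ht]
    exact ⟨by positivity, (div_le_one (by positivity)).2 (by linarith)⟩
  weight_nonneg t ht := by
    have ht' : (0 : ℝ) ≤ t - 1 := sub_nonneg.2 (by exact_mod_cast ht)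
    positivity
  weight_one := by simp
  weight_eq t ht := by
    rw [hα t ht]
    push_cast
    field_simp
    ring
  eq_mul_weight t ht := by
    rw [hα t ht, hγ t ht]
    push_cast
    field_simp
    ring
  error_le t ht htN := by
    rw [hα t ht, hγ t ht]
    exact stepsize_error_le hLG hLH hM t.cast_nonneg (by exact_mod_cast htN.le)

theorem two_add_one_div_sqrt_sq_le : (2 + 1 / √(1 - 2 / 3 : ℝ)) ^ 2 ≤ 15 := by
  have hsqrt : (4 / 7 : ℝ) ≤ √(1 - 2 / 3) := Real.le_sqrt_of_sq_le (by norm_num)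
  calc (2 + 1 / √(1 - 2 / 3 : ℝ)) ^ 2 ≤ (2 + 1 / (4 / 7)) ^ 2 := by gcongr
    _ ≤ 15 := by norm_num

end SpecificSteps

end AMP

open AMP
open scoped RealInnerProductSpace in
theorem amp_unbounded_specific_steps_general
    {E : Type*} [NormedAddCommGroup E] [InnerProductSpace ℝ E]
    {Z : Set E} {G J : E → ℝ} {DG H : E → E} {LG LH : ℝ} {α γ : ℕ → ℝ} {r w wag wmd : ℕ → E}
    {ustar : E} {N : ℕ} (hP : IsCompositeVI Z G J DG H LG LH)
    (hX : IsIterates Z J DG H α γ r w wag wmd)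
    (hustar : ustar ∈ Z) (hsol : ∀ a ∈ Z, 0 ≤ excess G J H a ustar)
    (hLG : 0 ≤ LG) (hLH : 0 ≤ LH) (hM : 0 < LG + LH * N) (hN : 2 ≤ N)
    (hα : ∀ t ≥ 1, α t = 2 / ((t : ℝ) + 1))
    (hγ : ∀ t ≥ 1, γ t = (t : ℝ) / (3 * (LG + LH * N))) :
    ∃ v : E,
      ‖v‖ ≤ (12 * LG / ((N : ℝ) * (N - 1)) + 12 * LH / (N - 1)) * ‖r 1 - ustar‖ ∧
      ∀ u ∈ Z, excess G J H (wag N) u - ⟪v, wag N - u⟫ ≤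
        (45 * LG / ((N : ℝ) * (N - 1)) + 45 * LH / (N - 1)) * ‖r 1 - ustar‖ ^ 2 := by
  have hN1 : (0 : ℝ) < N - 1 := sub_pos.2 (by exact_mod_cast hN)
  have hA : 0 < (N : ℝ) * (N - 1) / (6 * (LG + LH * N)) := by positivity
  have hcoef (C : ℝ) : C * LG / ((N : ℝ) * (N - 1)) + C * LH / (N - 1) =
      C / 3 / (2 * (N * (N - 1) / (6 * (LG + LH * N)))) := by
    field_simp
    ring
  obtain ⟨v, hv, hgap⟩ := exists_perturbation hP hX (isStepsize_specific hLG hLH hM hα hγ)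
    (by norm_num) hustar hsol (by omega) hA
  rw [hcoef, hcoef]
  generalize (N : ℝ) * (N - 1) / (6 * (LG + LH * N)) = A at *
  refine ⟨v, hv.trans_eq (by ring), fun u hu ↦ (hgap u hu).trans ?_⟩
  gcongr
  linarith [two_add_one_div_sqrt_sq_le]

open Finset in
open scoped RealInnerProductSpace in
/-- deterministic AMP on an unbounded feasible set, specific stepsizes. -/
theorem amp_unbounded_specific_steps
    {E : Type*} [NormedAddCommGroup E] [InnerProductSpace ℝ E] [FiniteDimensional ℝ E]
    (Z : Set E) (hZne : Z.Nonempty) (hZcl : IsClosed Z) (hZcv : Convex ℝ Z)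
    (V : E → E → ℝ) (hV : ∀ z u, V z u = ‖u - z‖ ^ 2 / 2)
    (J : E → ℝ) (hJ : ConvexOn ℝ Z J)
    (G : E → ℝ) (DG : E → E) (LG : ℝ) (hLG : 0 ≤ LG)
    (hGsmooth : ∀ v ∈ Z, ∀ x ∈ Z, G v ≤ G x + ⟪DG x, v - x⟫ + LG / 2 * ‖v - x‖ ^ 2)
    (hGcvx : ∀ v ∈ Z, ∀ x ∈ Z, G x + ⟪DG x, v - x⟫ ≤ G v)
    (H : E → E) (LH : ℝ) (hLH : 0 ≤ LH)
    (hHmono : ∀ v ∈ Z, ∀ x ∈ Z, 0 ≤ ⟪H x - H v, x - v⟫)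
    (hHlip : ∀ v ∈ Z, ∀ x ∈ Z, ‖H x - H v‖ ≤ LH * ‖x - v‖)
    (Q : E → E → ℝ)
    (hQ : ∀ a b, Q a b = G a - G b + ⟪H b, a - b⟫ + J a - J b)
    (α γ : ℕ → ℝ) (hαrange : ∀ t ≥ 1, 0 ≤ α t ∧ α t ≤ 1) (hγpos : ∀ t ≥ 1, 0 < γ t)
    (r w wag wmd : ℕ → E)
    (hr1Z : r 1 ∈ Z) (hw1 : w 1 = r 1) (hwag1 : wag 1 = r 1)
    (hwmd : ∀ t ≥ 1, wmd t = (1 - α t) • wag t + α t • r t)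
    (hwprox : ∀ t ≥ 1, w (t+1) ∈ Z ∧ IsMinOn
      (fun u => ⟪γ t • (H (r t) + DG (wmd t)), u - r t⟫ + V (r t) u + γ t * J u) Z (w (t+1)))
    (hrprox : ∀ t ≥ 1, r (t+1) ∈ Z ∧ IsMinOn
      (fun u => ⟪γ t • (H (w (t+1)) + DG (wmd t)), u - r t⟫ + V (r t) u + γ t * J u) Z (r (t+1)))
    (hwagrec : ∀ t ≥ 1, wag (t+1) = (1 - α t) • wag t + α t • w (t+1))
    (ustar : E) (hustarZ : ustar ∈ Z) (J' : E)
    (hJ'sub : ∀ u ∈ Z, J ustar + ⟪J', u - ustar⟫ ≤ J u)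
    (hstrong : ∀ u ∈ Z, ⟪DG ustar + H ustar + J', ustar - u⟫ ≤ 0)
    (D : ℝ) (hD : D = ‖r 1 - ustar‖)
    (hLHpos : 0 < LH)
    (N : ℕ) (hN : 2 ≤ N)
    (hαdef : ∀ t ≥ 1, α t = 2 / ((t : ℝ) + 1))
    (hγdef : ∀ t ≥ 1, γ t = (t : ℝ) / (3 * (LG + LH * (N : ℝ))))
    (gt : E → E → ℝ)
    (hgt : ∀ a v, gt a v = ⨆ u : Z, (Q a ↑u - ⟪v, a - ↑u⟫)) :
    ∃ (v : E) (ε : ℝ), 0 ≤ ε ∧ gt (wag N) v ≤ ε ∧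
      ‖v‖ ≤ (12 * LG / ((N : ℝ) * ((N : ℝ) - 1)) + 12 * LH / ((N : ℝ) - 1)) * D ∧
      ε ≤ (45 * LG / ((N : ℝ) * ((N : ℝ) - 1)) + 45 * LH / ((N : ℝ) - 1)) * D ^ 2 := by
  have hP : IsCompositeVI Z G J DG H LG LH := ⟨hJ, ⟨hGsmooth, hGcvx⟩, hHmono, hHlip⟩
  have hX : IsIterates Z J DG H α γ r w wag wmd := by
    simp only [hV] at hwprox hrprox
    exact ⟨hr1Z, hwag1, hwmd, hwprox, hrprox, hwagrec⟩
  have hsol : ∀ a ∈ Z, 0 ≤ excess G J H a ustar := fun a ha ↦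
    excess_nonneg_of_strong_solution (hGcvx a ha ustar hustarZ) (hJ'sub a ha) (hstrong a ha)
  obtain ⟨v, hv, hgap⟩ := amp_unbounded_specific_steps_general hP hX hustarZ hsol hLG hLH
    (by positivity) hN hαdef hγdef
  have : Nonempty Z := hZne.to_subtype
  have hN1 : (0 : ℝ) < N - 1 := sub_pos.2 (by exact_mod_cast hN)
  subst hD
  refine ⟨v, _, by positivity, ?_, hv, le_rfl⟩
  rw [hgt]
  exact ciSup_le fun u ↦ by simpa only [hQ] using! hgap u u.2
end

section
/- Suppose sup_{z₁,z₂∈Z} V(z₁, z₂) ≤ Ω_Z², α_1 = 1, 0 ≤ α_t < 1 for t > 1, γ_t > 0, and α_i/(Γ_i γ_i) ≤ α_{i+1}/(Γ_{i+1} γ_{i+1}) for all i ≥ 1. Then for any points r_1, …, r_{t+1} ∈ Z and every u ∈ Z, B_t(u, r_{[t]}) := Σ_{i=1}^t (α_i/(Γ_i γ_i)) (V(r_i, u) − V(r_{i+1}, u)) ≤ (α_t/(Γ_t γ_t)) Ω_Z². -/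
/-!
Writing `w i = α i / (Γ i * γ i)` and `d i = ΩZ ^ 2 - V (r i) u ≥ 0`, the sum is
`∑ w i * (d (i + 1) - d i)`. As `w` is nondecreasing, `w i * d (i + 1) ≤ w (i + 1) * d (i + 1)`, so
the sum telescopes to at most `w t * d (t + 1) - w 1 * d 1 ≤ w t * d (t + 1) ≤ w t * ΩZ ^ 2`.
-/

section WeightedTelescoping

variable {R : Type*} [Ring R] [PartialOrder R] [IsOrderedRing R] {w v : ℕ → R} {M : R} {m n : ℕ}

theorem sum_Icc_mul_sub_succ_le_mul_sub (hw : MonotoneOn w (Set.Ici m)) (hwm : 0 ≤ w m)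
    (hv : ∀ i ≥ m, v i ≤ M) (hmn : m ≤ n) :
    ∑ i ∈ Finset.Icc m n, w i * (v i - v (i + 1)) ≤ w n * (M - v (n + 1)) := by
  induction n, hmn using Nat.le_induction with
  | base =>
    rw [Finset.Icc_self, Finset.sum_singleton]
    exact mul_le_mul_of_nonneg_left (sub_le_sub_right (hv m le_rfl) _) hwm
  | succ n hmn ih =>
    have hmn' : m ≤ n + 1 := hmn.trans n.le_succ
    have gap_nonneg : 0 ≤ M - v (n + 1) := sub_nonneg.mpr (hv _ hmn')
    calc ∑ i ∈ Finset.Icc m (n + 1), w i * (v i - v (i + 1))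
        = ∑ i ∈ Finset.Icc m n, w i * (v i - v (i + 1)) +
            w (n + 1) * (v (n + 1) - v (n + 2)) := Finset.sum_Icc_succ_top hmn' _
      _ ≤ w n * (M - v (n + 1)) + w (n + 1) * (v (n + 1) - v (n + 2)) := by gcongr
      _ ≤ w (n + 1) * (M - v (n + 1)) + w (n + 1) * (v (n + 1) - v (n + 2)) := by
        gcongr
        exact hw hmn hmn' n.le_succ
      _ = w (n + 1) * (M - v (n + 2)) := by rw [← mul_add, sub_add_sub_cancel]

theorem sum_Icc_mul_sub_succ_le_mul (hw : MonotoneOn w (Set.Ici m)) (hwm : 0 ≤ w m)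
    (hv₀ : ∀ i ≥ m, 0 ≤ v i) (hv : ∀ i ≥ m, v i ≤ M) (hmn : m ≤ n) :
    ∑ i ∈ Finset.Icc m n, w i * (v i - v (i + 1)) ≤ w n * M := by
  have hwn : 0 ≤ w n := hwm.trans (hw Set.self_mem_Ici hmn hmn)
  calc ∑ i ∈ Finset.Icc m n, w i * (v i - v (i + 1))
      ≤ w n * (M - v (n + 1)) := sum_Icc_mul_sub_succ_le_mul_sub hw hwm hv hmn
    _ ≤ w n * M :=
      mul_le_mul_of_nonneg_left (sub_le_self _ (hv₀ _ (hmn.trans n.le_succ))) hwn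

theorem amp_Bt_bound_general {X : Type*} {Z : Set X} {V : X → X → R}
    (hV₀ : ∀ z ∈ Z, ∀ u ∈ Z, 0 ≤ V z u) (hV : ∀ z ∈ Z, ∀ u ∈ Z, V z u ≤ M)
    (hw₁ : 0 ≤ w 1) (hw : ∀ i ≥ 1, w i ≤ w (i + 1)) {r : ℕ → X} (hr : ∀ i ≥ 1, r i ∈ Z) :
    ∀ t ≥ 1, ∀ u ∈ Z,
      ∑ i ∈ Finset.Icc 1 t, w i * (V (r i) u - V (r (i + 1)) u) ≤ w t * M :=
  fun _ ht u hu ↦ sum_Icc_mul_sub_succ_le_mul (v := fun i ↦ V (r i) u)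
    (monotoneOn_nat_Ici_of_le_succ hw) hw₁ (fun i hi ↦ hV₀ _ (hr i hi) u hu)
    (fun i hi ↦ hV _ (hr i hi) u hu) ht

end WeightedTelescoping

open Finset in
/-- bound on the telescoping Bregman-divergence sum `B_t`. -/
theorem amp_Bt_bound
    {E : Type*} [NormedAddCommGroup E] [NormedSpace ℝ E] [FiniteDimensional ℝ E]
    (Z : Set E) (hZne : Z.Nonempty) (hZcl : IsClosed Z) (hZcv : Convex ℝ Z)
    (μ : ℝ) (hμ : 0 < μ)
    (ω : E → ℝ) (Dω : E → E →L[ℝ] ℝ)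
    (hωdiff : ∀ z ∈ Z, HasFDerivWithinAt ω (Dω z) Z z)
    (hωcont : ContinuousOn Dω Z)
    (hωsc : StrongConvexOn Z μ ω)
    (V : E → E → ℝ) (hV : ∀ z u, V z u = ω u - ω z - Dω z (u - z))
    (hVnonneg : ∀ z ∈ Z, ∀ u ∈ Z, 0 ≤ V z u)
    (ΩZ : ℝ) (hΩ : ∀ z₁ ∈ Z, ∀ z₂ ∈ Z, V z₁ z₂ ≤ ΩZ ^ 2)
    (α γ : ℕ → ℝ) (hα1 : α 1 = 1) (hα : ∀ t ≥ 2, 0 ≤ α t ∧ α t < 1)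
    (hγpos : ∀ t ≥ 1, 0 < γ t)
    (Γ : ℕ → ℝ) (hΓ1 : Γ 1 = 1) (hΓrec : ∀ t ≥ 2, Γ t = (1 - α t) * Γ (t-1))
    (hmono : ∀ i ≥ 1, α i / (Γ i * γ i) ≤ α (i+1) / (Γ (i+1) * γ (i+1)))
    (r : ℕ → E) (hrZ : ∀ i ≥ 1, r i ∈ Z) :
    ∀ t ≥ 1, ∀ u ∈ Z,
      ∑ i ∈ Finset.Icc 1 t, α i / (Γ i * γ i) * (V (r i) u - V (r (i+1)) u) ≤
        α t / (Γ t * γ t) * ΩZ ^ 2 := by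
  have hw₁ : 0 ≤ α 1 / (Γ 1 * γ 1) := by simpa [hα1, hΓ1] using (hγpos 1 le_rfl).le
  exact amp_Bt_bound_general (w := fun i ↦ α i / (Γ i * γ i)) hVnonneg hΩ hw₁ hmono hrZ
end
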